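/- Identify 2^ℕ × 2^ℕ with 2^ℕ via the join map (A, B) ↦ A ⊕ B, where (A⊕B)(2n) = A(n) and (A⊕B)(2n+1) = B(n). If μ and ν are K-trivial Borel probability measures on 2^ℕ, then the pushforward of the product measure μ × ν under the join map is a K-trivial measure. -/

import Mathlib

/-!
The heart of the matter is that strings `x`, `y` of length `m` satisfy
`K(x ⊕ y) + K(m) ≤ K(x) + K(y) + O(1)`. Averaging this over `μ × ν` bounds the average of `K` over
the first `2m` bits by `K(m) + O(1)`, because either of the two averages on the right exceeds `K(m)`
by `O(1)` only; and `m` is computable from `2m`.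

For the inequality, the coding theorem bounds the total weight `2^{-|u|}` of all programs `u` for
strings of length `m` by `2^{C - K(m)}`. Hence, if each pair of such programs `u`, `v` and each
program `p` for `m` request a description of `x ⊕ y` of length `|u| + |v| - |p| + 2C`, then the
requests with a fixed `p` have total weight at most `2^{-|p|}`, and the Kraft–Chaitin theorem
applies. The programs `p` that are longer than `K(m)` are harmless because the requests can be
withheld once the weight of the listed `u` exceeds `2^{C - |p|}`.
-/

open MeasureTheory Filter

/-- Cantor space: the space of infinite binary sequences. -/
abbrev Cantor : Type := ℕ → Bool

/-- Finite binary strings. -/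
abbrev BStr : Type := List Bool

/-- The cylinder set of sequences extending the string `x`. -/
def cyl (x : BStr) : Set Cantor := {Z | ∀ i : Fin x.length, Z i.1 = x.get i}

/-- The string of the first `n` bits of `Z`. -/
def seg (Z : Cantor) (n : ℕ) : BStr := List.ofFn fun i : Fin n => Z i.1

/-- `lam` is the uniform (fair-coin product) measure: every cylinder `[x]`
has measure `2^{-|x|}`. -/
def IsUniform (lam : Measure Cantor) : Prop :=
  ∀ x : BStr, lam (cyl x) = (2 : ENNReal)⁻¹ ^ x.length

/-- `(G_m)` is a Martin-Löf test with respect to the measure `ρ`: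
the sets `G_m` are uniformly effectively open and `ρ (G_m) ≤ 2^{-m}`. -/
def IsMLTest (ρ : Measure Cantor) (G : ℕ → Set Cantor) : Prop :=
  (∃ σ : ℕ → ℕ → BStr, Computable₂ σ ∧ ∀ m, G m = ⋃ i, cyl (σ m i)) ∧
  ∀ m, ρ (G m) ≤ (2 : ENNReal)⁻¹ ^ m

/-- `μ` is Martin-Löf absolutely continuous in `ρ`: `inf_m μ(G_m) = 0`
for every `ρ`-Martin-Löf test `(G_m)`. -/
def MLAC (μ ρ : Measure Cantor) : Prop :=
  ∀ G : ℕ → Set Cantor, IsMLTest ρ G → ⨅ m, μ (G m) = 0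

/-- `Z` is Martin-Löf random with respect to `lam`. -/
def MLRandom (lam : Measure Cantor) (Z : Cantor) : Prop :=
  ∀ G : ℕ → Set Cantor, IsMLTest lam G → Z ∉ ⋂ m, G m

/-- `ρ` is a computable measure: `ρ [x]` is a computable real, uniformly in `x`. -/
def ComputableMeasure (ρ : Measure Cantor) : Prop :=
  ∃ q : BStr → ℕ → ℚ, Computable₂ q ∧
    ∀ x k, |(q x k : ℝ) - (ρ (cyl x)).toReal| ≤ (2 : ℝ)⁻¹ ^ k

/-- `U` is a universal plain machine. -/
def UniversalPlain (U : BStr →. BStr) : Prop :=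
  Partrec U ∧ ∀ M : BStr →. BStr, Partrec M →
    ∃ c : ℕ, ∀ p x, x ∈ M p → ∃ q : BStr, q.length ≤ p.length + c ∧ x ∈ U q

/-- The domain of `M` is an antichain under the prefix relation. -/
def PrefixFreeDom (M : BStr →. BStr) : Prop :=
  ∀ p q : BStr, (M p).Dom → (M q).Dom → p <+: q → p = q

/-- `U` is a universal prefix-free machine. -/
def UniversalPrefixFree (U : BStr →. BStr) : Prop :=
  Partrec U ∧ PrefixFreeDom U ∧
  ∀ M : BStr →. BStr, Partrec M → PrefixFreeDom M →
    ∃ c : ℕ, ∀ p x, x ∈ M p → ∃ q : BStr, q.length ≤ p.length + c ∧ x ∈ U q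

/-- Kolmogorov complexity of the string `x` with respect to the machine `U`:
the minimal length of a `U`-description of `x`. -/
noncomputable def cpx (U : BStr →. BStr) (x : BStr) : ℕ :=
  sInf {n | ∃ q : BStr, q.length = n ∧ x ∈ U q}

/-- A natural number `n` identified with the string `0^n`. -/
def numStr (n : ℕ) : BStr := List.replicate n false

/-- Complexity of the natural number `n` (i.e., of the string `0^n`). -/
noncomputable def cpxN (U : BStr →. BStr) (n : ℕ) : ℕ := cpx U (numStr n)

/-- The `μ`-average complexity of the strings of length `n`:
`Σ_{|x|=n} cpx(x) · μ[x]`. -/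
noncomputable def avgCpx (U : BStr →. BStr) (μ : Measure Cantor) (n : ℕ) : ℝ :=
  ∑ v : Fin n → Bool, (cpx U (List.ofFn v) : ℝ) * (μ (cyl (List.ofFn v))).toReal

/-- A measure `μ` is trivial for the complexity given by the machine `U`
(e.g. K-trivial when `U` is the universal prefix-free machine, C-trivial
when `U` is the universal plain machine). -/
def MeasTrivial (U : BStr →. BStr) (μ : Measure Cantor) : Prop :=
  ∃ c : ℝ, ∀ n : ℕ, avgCpx U μ n ≤ (cpxN U n : ℝ) + c

/-- The join map `(A, B) ↦ A ⊕ B` identifying `2^ℕ × 2^ℕ` with `2^ℕ`: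
`(A⊕B)(2n) = A(n)` and `(A⊕B)(2n+1) = B(n)`. -/
def join (p : Cantor × Cantor) : Cantor :=
  fun n => if n % 2 = 0 then p.1 (n / 2) else p.2 (n / 2)

open Finset (range)
open scoped ENNReal NNReal

/-! ### Computable functions -/

section Computability

attribute [fun_prop] Computable ComputablePred Computable.id Computable.const Computable.comp
  Computable.fst Computable.snd Computable.pair Computable.encode
  Computable.decode Computable.option_some Computable.list_length

variable {α β σ : Type*} [Primcodable α] [Primcodable β] [Primcodable σ]

@[fun_prop]
theorem computable_nat_add {f g : α → ℕ} (hf : Computable f) (hg : Computable g) :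
    Computable fun a => f a + g a :=
  Primrec.nat_add.to_comp.comp hf hg

@[fun_prop]
theorem computable_nat_sub {f g : α → ℕ} (hf : Computable f) (hg : Computable g) :
    Computable fun a => f a - g a :=
  Primrec.nat_sub.to_comp.comp hf hg

@[fun_prop]
theorem computable_nat_mul {f g : α → ℕ} (hf : Computable f) (hg : Computable g) :
    Computable fun a => f a * g a :=
  Primrec.nat_mul.to_comp.comp hf hg

@[fun_prop]
theorem computable_nat_div {f g : α → ℕ} (hf : Computable f) (hg : Computable g) :
    Computable fun a => f a / g a :=
  Primrec.nat_div.to_comp.comp hf hg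

@[fun_prop]
theorem computable_nat_mod {f g : α → ℕ} (hf : Computable f) (hg : Computable g) :
    Computable fun a => f a % g a :=
  Primrec.nat_mod.to_comp.comp hf hg

@[fun_prop]
theorem computable_sum_range {f : α → ℕ → ℕ} {n : α → ℕ}
    (hf : Computable fun q : α × ℕ => f q.1 q.2) (hn : Computable n) :
    Computable fun a => ∑ t ∈ range (n a), f a t := by
  have step : Computable fun q : α × ℕ × ℕ => q.2.2 + f q.1 q.2.1 := by fun_prop
  refine (Computable.nat_rec hn (Computable.const 0) step.to₂).of_eq fun a => ?_
  induction n a with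
  | zero => rfl
  | succ n ih => rw [Finset.sum_range_succ, ← ih]

@[fun_prop]
theorem computable_two_pow {f : α → ℕ} (hf : Computable f) : Computable fun a => 2 ^ f a := by
  have step : Computable fun q : α × ℕ × ℕ => q.2.2 * 2 := by fun_prop
  refine (Computable.nat_rec hf (Computable.const 1) step.to₂).of_eq fun a => ?_
  induction f a with
  | zero => rfl
  | succ n ih => rw [pow_succ, ← ih]

@[fun_prop]
theorem computable_option_bind {f : α → Option β} {g : α → β → Option σ} (hf : Computable f)
    (hg : Computable fun q : α × β => g q.1 q.2) : Computable fun a => (f a).bind (g a) :=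
  Computable.option_bind hf hg

@[fun_prop]
theorem computable_option_map {f : α → Option β} {g : α → β → σ} (hf : Computable f)
    (hg : Computable fun q : α × β => g q.1 q.2) : Computable fun a => (f a).map (g a) :=
  Computable.option_map hf hg

@[fun_prop]
theorem computable_option_elim {f : α → Option β} {d : α → σ} {g : α → β → σ}
    (hf : Computable f) (hd : Computable d) (hg : Computable fun q : α × β => g q.1 q.2) :
    Computable fun a => (f a).elim (d a) (g a) :=
  (Computable.option_casesOn hf hd hg.to₂).of_eq fun a => by cases f a <;> rfl

@[fun_prop]
theorem computable_list_map_range {f : α → ℕ → σ} {n : α → ℕ}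
    (hf : Computable fun q : α × ℕ => f q.1 q.2) (hn : Computable n) :
    Computable fun a => (List.range (n a)).map (f a) := by
  have step : Computable fun q : α × ℕ × List σ => q.2.2 ++ [f q.1 q.2.1] :=
    Computable.list_append.comp (by fun_prop)
      (Computable.list_cons.comp (by fun_prop) (Computable.const []))
  refine (Computable.nat_rec hn (Computable.const []) step.to₂).of_eq fun a => ?_
  induction n a with
  | zero => rfl
  | succ n ih => simp only [List.range_succ, List.map_append, List.map_cons, List.map_nil, ← ih]

@[fun_prop]
theorem computable_ite {p : α → Prop} [DecidablePred p] {f g : α → σ} (hp : ComputablePred p)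
    (hf : Computable f) (hg : Computable g) : Computable fun a => if p a then f a else g a :=
  (Computable.cond hp.decide hf hg).of_eq fun a => by by_cases h : p a <;> simp [h]

@[fun_prop]
theorem computablePred_and {p q : α → Prop} (hp : ComputablePred p) (hq : ComputablePred q) :
    ComputablePred fun a => p a ∧ q a := by
  classical
  exact ((Primrec.and.to_comp.comp hp.decide hq.decide).of_eq fun a => by simp).computablePred

@[fun_prop]
theorem computablePred_not {p : α → Prop} (hp : ComputablePred p) :
    ComputablePred fun a => ¬p a :=
  hp.not

@[fun_prop]
theorem computablePred_eq {f g : α → β} (hf : Computable f) (hg : Computable g) :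
    ComputablePred fun a => f a = g a := by
  classical exact ((Primrec.eq (α := β)).decide.to_comp.comp hf hg).computablePred

@[fun_prop]
theorem computablePred_le {f g : α → ℕ} (hf : Computable f) (hg : Computable g) :
    ComputablePred fun a => f a ≤ g a :=
  (Primrec.nat_le.decide.to_comp.comp hf hg).computablePred

end Computability

/-! ### Dyadic numbers and partial sums -/

section Dyadic

variable {α : Type*} [Primcodable α]

/-- A family of nonnegative dyadic rationals whose numerators and exponents can be computed. -/
@[fun_prop]
def ComputableDyadic (f : α → ℝ≥0) : Prop :=
  ∃ num expo : α → ℕ, Computable num ∧ Computable expo ∧ ∀ a, f a * 2 ^ expo a = num a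

@[fun_prop]
theorem computableDyadic_natCast {f : α → ℕ} (hf : Computable f) :
    ComputableDyadic fun a => (f a : ℝ≥0) :=
  ⟨f, fun _ => 0, by fun_prop, by fun_prop, by simp⟩

@[fun_prop]
theorem computableDyadic_inv_two_pow {f : α → ℕ} (hf : Computable f) :
    ComputableDyadic fun a => (2 : ℝ≥0)⁻¹ ^ f a :=
  ⟨fun _ => 1, f, by fun_prop, by fun_prop, by simp⟩

@[fun_prop]
theorem ComputableDyadic.mul {f g : α → ℝ≥0} (hf : ComputableDyadic f)
    (hg : ComputableDyadic g) : ComputableDyadic fun a => f a * g a := by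
  obtain ⟨numf, expof, hnumf, hexpof, hf⟩ := hf
  obtain ⟨numg, expog, hnumg, hexpog, hg⟩ := hg
  refine ⟨fun a => numf a * numg a, fun a => expof a + expog a, by fun_prop, by fun_prop,
    fun a => ?_⟩
  rw [Nat.cast_mul, ← hf, ← hg]
  ring

@[fun_prop]
theorem ComputableDyadic.sum_range {f : α → ℕ → ℝ≥0} {n : α → ℕ}
    (hf : ComputableDyadic fun q : α × ℕ => f q.1 q.2) (hn : Computable n) :
    ComputableDyadic fun a => ∑ t ∈ range (n a), f a t := by
  obtain ⟨num, expo, hnum, hexpo, hf⟩ := hf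
  let total (a : α) : ℕ := ∑ t ∈ range (n a), expo (a, t)
  have htotal : Computable total := by fun_prop
  refine ⟨fun a => ∑ t ∈ range (n a), num (a, t) * 2 ^ (total a - expo (a, t)), total,
    by fun_prop, htotal, fun a => ?_⟩
  rw [Finset.sum_mul, Nat.cast_sum]
  refine Finset.sum_congr rfl fun t ht => ?_
  have hle : expo (a, t) ≤ total a :=
    Finset.single_le_sum (f := fun t => expo (a, t)) (fun _ _ => Nat.zero_le _) ht
  have hft : f a t * 2 ^ expo (a, t) = num (a, t) := hf (a, t)
  rw [Nat.cast_mul, ← hft, Nat.cast_pow, Nat.cast_ofNat, mul_assoc, ← pow_add,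
    Nat.add_sub_cancel' hle]

@[fun_prop]
theorem ComputableDyadic.computablePred_le {f g : α → ℝ≥0} (hf : ComputableDyadic f)
    (hg : ComputableDyadic g) : ComputablePred fun a => f a ≤ g a := by
  obtain ⟨numf, expof, hnumf, hexpof, hf⟩ := hf
  obtain ⟨numg, expog, hnumg, hexpog, hg⟩ := hg
  have h : ComputablePred fun a => numf a * 2 ^ expog a ≤ numg a * 2 ^ expof a := by fun_prop
  refine h.of_eq fun a => ?_
  rw [← Nat.cast_le (α := ℝ≥0), Nat.cast_mul, Nat.cast_mul, ← hf, ← hg, Nat.cast_pow,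
    Nat.cast_pow, Nat.cast_ofNat, mul_right_comm (g a)]
  rw [mul_assoc, mul_assoc]
  exact mul_le_mul_iff_left₀ (by positivity)

/-- The weight `2^{-r}` of a request for a codeword of length `r`; `none` stands for the absence
of a request. -/
noncomputable def weight (o : Option ℕ) : ℝ≥0 :=
  o.elim 0 (2⁻¹ ^ ·)

theorem coe_two_inv_pow (r : ℕ) : ((2⁻¹ ^ r : ℝ≥0) : ℝ≥0∞) = 2⁻¹ ^ r := by
  simp [ENNReal.inv_pow]

@[simp]
theorem weight_none : weight none = 0 := rfl

@[simp]
theorem weight_some (r : ℕ) : weight (some r) = 2⁻¹ ^ r := rfl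

@[fun_prop]
theorem computableDyadic_weight {f : α → Option ℕ} (hf : Computable f) :
    ComputableDyadic fun a => weight (f a) := by
  refine ⟨fun a => (f a).elim 0 fun _ => 1, fun a => (f a).elim 0 id, by fun_prop, ?_, ?_⟩
  · fun_prop
  · intro a
    cases h : f a <;> simp [h]

/-- The total weight of the first `s` requests of `g`. -/
noncomputable def partialWeight (g : ℕ → Option ℕ) (s : ℕ) : ℝ≥0 :=
  ∑ t ∈ range s, weight (g t)

@[fun_prop]
theorem computableDyadic_partialWeight {g : α → ℕ → Option ℕ} {s : α → ℕ}
    (hg : Computable fun q : α × ℕ => g q.1 q.2) (hs : Computable s) :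
    ComputableDyadic fun a => partialWeight (g a) (s a) := by
  unfold partialWeight
  fun_prop

theorem partialWeight_zero (g : ℕ → Option ℕ) : partialWeight g 0 = 0 := rfl

theorem partialWeight_succ (g : ℕ → Option ℕ) (s : ℕ) :
    partialWeight g (s + 1) = partialWeight g s + weight (g s) :=
  Finset.sum_range_succ _ _

theorem partialWeight_mono (g : ℕ → Option ℕ) : Monotone (partialWeight g) :=
  Finset.sum_mono_set _ |>.comp Finset.range_mono

theorem coe_partialWeight_le_tsum (g : ℕ → Option ℕ) (s : ℕ) :
    (partialWeight g s : ℝ≥0∞) ≤ ∑' t, (weight (g t) : ℝ≥0∞) := by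
  rw [partialWeight, ENNReal.ofNNReal_finsetSum]
  exact ENNReal.sum_le_tsum _

end Dyadic

/-! ### The Kraft–Chaitin theorem -/

section BinaryValue

/-- The number whose binary expansion is `p`, most significant digit first. -/
def binValue (p : BStr) : ℕ :=
  p.foldl (fun v b => 2 * v + b.toNat) 0

theorem binValue_concat (p : BStr) (b : Bool) :
    binValue (p ++ [b]) = 2 * binValue p + b.toNat := by
  simp [binValue]

theorem computable_binValue : Computable binValue := by
  have htoNat : Primrec Bool.toNat := Primrec.dom_finite _
  have step : Primrec₂ fun (_ : BStr) (y : ℕ × Bool) => 2 * y.1 + y.2.toNat :=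
    Primrec.nat_add.comp
      (Primrec.nat_mul.comp (Primrec.const 2) (Primrec.fst.comp Primrec.snd))
      (htoNat.comp (Primrec.snd.comp Primrec.snd))
  exact (Primrec.list_foldl Primrec.id (Primrec.const 0) step).to_comp

theorem binValue_mul_two_pow_le (p q : BStr) :
    binValue p * 2 ^ q.length ≤ binValue (p ++ q) := by
  induction q using List.reverseRecOn with
  | nil => simp
  | append_singleton q b ih =>
    rw [← List.append_assoc, binValue_concat, List.length_append, List.length_singleton, pow_succ,
      ← mul_assoc]
    omega

theorem binValue_append_lt (p q : BStr) :
    binValue (p ++ q) < (binValue p + 1) * 2 ^ q.length := by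
  induction q using List.reverseRecOn with
  | nil => simp
  | append_singleton q b ih =>
    have hb := Bool.toNat_le b
    rw [← List.append_assoc, binValue_concat, List.length_append, List.length_singleton, pow_succ,
      ← mul_assoc]
    omega

theorem exists_binValue_eq {n v : ℕ} (hv : v < 2 ^ n) :
    ∃ p : BStr, p.length = n ∧ binValue p = v := by
  induction n generalizing v with
  | zero => exact ⟨[], rfl, by simpa [binValue, eq_comm] using hv⟩
  | succ n ih =>
    obtain ⟨p, hlength, hvalue⟩ := ih (v := v / 2) (by rw [pow_succ] at hv; omega)
    refine ⟨p ++ [decide (v % 2 = 1)], by simp [hlength], ?_⟩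
    rw [binValue_concat, hvalue]
    rcases Nat.mod_two_eq_zero_or_one v with h | h <;> simp [h] <;> omega

/-- The interval `[0.p, 0.p + 2^{-|p|})` of the reals whose binary expansion starts with `p`. -/
def dyadicCell (p : BStr) : Set ℝ≥0 :=
  Set.Ico (binValue p * 2⁻¹ ^ p.length) ((binValue p + 1 : ℕ) * 2⁻¹ ^ p.length)

theorem left_lt_right_dyadicCell (p : BStr) :
    (binValue p * 2⁻¹ ^ p.length : ℝ≥0) < (binValue p + 1 : ℕ) * 2⁻¹ ^ p.length := by
  gcongr
  exact Nat.lt_succ_self _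

theorem dyadicCell_nonempty (p : BStr) : (dyadicCell p).Nonempty :=
  Set.nonempty_Ico.2 (left_lt_right_dyadicCell p)

theorem dyadicCell_subset_of_isPrefix {p q : BStr} (h : p <+: q) :
    dyadicCell q ⊆ dyadicCell p := by
  obtain ⟨t, rfl⟩ := h
  have rescale (v : ℕ) :
      (v * 2⁻¹ ^ p.length : ℝ≥0) = (v * 2 ^ t.length : ℕ) * 2⁻¹ ^ (p ++ t).length := by
    rw [List.length_append, pow_add]
    push_cast
    rw [inv_pow 2 t.length]
    field_simp
  unfold dyadicCell
  rw [rescale (binValue p), rescale (binValue p + 1)]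
  refine Set.Ico_subset_Ico ?_ ?_
  · gcongr
    exact binValue_mul_two_pow_le p t
  · gcongr
    exact binValue_append_lt p t

theorem exists_dyadicCell_subset {a : ℝ≥0} {r : ℕ} (h : a + 2⁻¹ ^ r ≤ 1) :
    ∃ p : BStr, p.length = r + 1 ∧ dyadicCell p ⊆ Set.Ico a (a + 2⁻¹ ^ r) := by
  have hpow : (2 : ℝ≥0) ^ (r + 1) * 2⁻¹ ^ (r + 1) = 1 := by simp
  have htwo : (2 : ℝ≥0) * 2⁻¹ ^ (r + 1) = 2⁻¹ ^ r := by rw [pow_succ]; field_simp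
  let v := ⌈a * 2 ^ (r + 1)⌉₊
  have left : a ≤ v * 2⁻¹ ^ (r + 1) := by
    calc a = a * 2 ^ (r + 1) * 2⁻¹ ^ (r + 1) := by rw [mul_assoc, hpow, mul_one]
      _ ≤ v * 2⁻¹ ^ (r + 1) := by gcongr; exact Nat.le_ceil _
  have right : (v + 1 : ℕ) * 2⁻¹ ^ (r + 1) ≤ a + 2⁻¹ ^ r := by
    calc ((v + 1 : ℕ) * 2⁻¹ ^ (r + 1) : ℝ≥0)
        ≤ (a * 2 ^ (r + 1) + 1 + 1) * 2⁻¹ ^ (r + 1) := by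
          push_cast
          gcongr
          exact (Nat.ceil_lt_add_one zero_le).le
      _ = a * (2 ^ (r + 1) * 2⁻¹ ^ (r + 1)) + 2 * 2⁻¹ ^ (r + 1) := by ring
      _ = a + 2⁻¹ ^ r := by rw [hpow, htwo, mul_one]
  have hv : v + 1 ≤ 2 ^ (r + 1) := by
    have := right.trans h
    rw [← hpow] at this
    exact_mod_cast le_of_mul_le_mul_right this (by positivity)
  obtain ⟨p, hlength, hvalue⟩ := exists_binValue_eq (Nat.lt_of_succ_le hv)
  refine ⟨p, hlength, ?_⟩
  rw [dyadicCell, hlength, hvalue]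
  exact Set.Ico_subset_Ico left right

@[fun_prop]
theorem computablePred_dyadicCell_subset {α : Type*} [Primcodable α] {p : α → BStr}
    {a b : α → ℝ≥0} (hp : Computable p) (ha : ComputableDyadic a) (hb : ComputableDyadic b) :
    ComputablePred fun x => dyadicCell (p x) ⊆ Set.Ico (a x) (b x) := by
  have hvalue := computable_binValue.comp hp
  have h : ComputablePred fun x =>
      a x ≤ binValue (p x) * 2⁻¹ ^ (p x).length ∧
        (binValue (p x) + 1 : ℕ) * 2⁻¹ ^ (p x).length ≤ b x := by fun_prop
  exact h.of_eq fun x => (Set.Ico_subset_Ico_iff (left_lt_right_dyadicCell _)).symm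

end BinaryValue

section KraftChaitin

variable {f : ℕ → Option (ℕ × BStr)}

/-- The interval allotted to the `i`-th request: the requests `f`, read as pairs of a length and
an output, are packed one after another from `0`. -/
def requestInterval (f : ℕ → Option (ℕ × BStr)) (i : ℕ) : Set ℝ≥0 :=
  Set.Ico (partialWeight (fun i => (f i).map Prod.fst) i)
    (partialWeight (fun i => (f i).map Prod.fst) (i + 1))

theorem eq_of_mem_requestInterval {x : ℝ≥0} {i j : ℕ} (hi : x ∈ requestInterval f i)
    (hj : x ∈ requestInterval f j) : i = j :=
  (partialWeight_mono _).pairwise_disjoint_on_Ico_succ.eq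
    (Set.not_disjoint_iff.2 ⟨x, hi, hj⟩)

open Classical in
/-- The answer to the program `p` provided by the `i`-th request: its output, if `p` is a codeword
for it. A codeword is one bit longer than requested, so that the interval allotted to the request
is guaranteed to contain its cell. -/
noncomputable def requestAnswer (f : ℕ → Option (ℕ × BStr)) (p : BStr) (i : ℕ) : Option BStr :=
  (f i).bind fun y =>
    if p.length = y.1 + 1 ∧ dyadicCell p ⊆ requestInterval f i then some y.2 else none

theorem requestAnswer_eq_some {p x : BStr} {i : ℕ} :
    requestAnswer f p i = some x ↔
      ∃ r, f i = some (r, x) ∧ p.length = r + 1 ∧ dyadicCell p ⊆ requestInterval f i := by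
  simp only [requestAnswer, Option.bind_eq_some_iff, Prod.exists, Option.ite_none_right_eq_some,
    Option.some.injEq]
  constructor
  · rintro ⟨r, _, h, hp, rfl⟩
    exact ⟨r, h, hp⟩
  · rintro ⟨r, h, hp⟩
    exact ⟨r, x, h, hp, rfl⟩

theorem computable_requestAnswer (hf : Computable f) : Computable₂ (requestAnswer f) := by
  unfold Computable₂ requestAnswer requestInterval
  fun_prop

theorem index_eq_of_isPrefix {p q x y : BStr} {i j : ℕ} (hp : requestAnswer f p i = some x)
    (hq : requestAnswer f q j = some y) (hpq : p <+: q) : i = j := by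
  obtain ⟨-, -, -, hi⟩ := requestAnswer_eq_some.1 hp
  obtain ⟨-, -, -, hj⟩ := requestAnswer_eq_some.1 hq
  obtain ⟨z, hz⟩ := dyadicCell_nonempty q
  exact eq_of_mem_requestInterval (hi (dyadicCell_subset_of_isPrefix hpq hz)) (hj hz)

theorem mem_rfindOpt_requestAnswer {p x : BStr} :
    x ∈ Nat.rfindOpt (requestAnswer f p) ↔ ∃ i, requestAnswer f p i = some x := by
  refine ⟨Nat.rfindOpt_spec, fun ⟨i, hi⟩ => ?_⟩
  obtain ⟨y, hy⟩ := Part.dom_iff_mem.1 (Nat.rfindOpt_dom.2 ⟨i, x, hi⟩)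
  obtain ⟨j, hj⟩ := Nat.rfindOpt_spec hy
  obtain rfl := index_eq_of_isPrefix hi hj List.prefix_rfl
  rwa [Option.some_injective _ (hi.symm.trans hj)]

theorem prefixFreeDom_rfindOpt_requestAnswer :
    PrefixFreeDom fun p => Nat.rfindOpt (requestAnswer f p) := by
  intro p q hp hq hpq
  obtain ⟨i, x, hx⟩ := Nat.rfindOpt_dom.1 hp
  obtain ⟨j, y, hy⟩ := Nat.rfindOpt_dom.1 hq
  obtain rfl := index_eq_of_isPrefix hx hy hpq
  obtain ⟨r, hr, hplen, -⟩ := requestAnswer_eq_some.1 hx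
  obtain ⟨r', hr', hqlen, -⟩ := requestAnswer_eq_some.1 hy
  obtain ⟨rfl, -⟩ := Prod.mk.inj (Option.some_injective _ (hr.symm.trans hr'))
  exact hpq.eq_of_length (hplen.trans hqlen.symm)

theorem exists_requestAnswer_eq_some (hsum : ∑' i, (weight ((f i).map Prod.fst) : ℝ≥0∞) ≤ 1)
    {i r : ℕ} {x : BStr} (h : f i = some (r, x)) :
    ∃ p : BStr, p.length = r + 1 ∧ requestAnswer f p i = some x := by
  let g (i : ℕ) := (f i).map Prod.fst
  have hsucc : partialWeight g (i + 1) = partialWeight g i + 2⁻¹ ^ r := by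
    simp [partialWeight_succ, g, h]
  have hle : partialWeight g i + 2⁻¹ ^ r ≤ 1 := by
    rw [← hsucc]
    exact_mod_cast (coe_partialWeight_le_tsum g (i + 1)).trans hsum
  obtain ⟨p, hlength, hcell⟩ := exists_dyadicCell_subset hle
  rw [← hsucc] at hcell
  exact ⟨p, hlength, requestAnswer_eq_some.2 ⟨r, h, hlength, hcell⟩⟩

end KraftChaitin

section Complexity

variable {U : BStr →. BStr}

theorem cpx_le_length {p x : BStr} (h : x ∈ U p) : cpx U x ≤ p.length :=
  Nat.sInf_le ⟨p, rfl, h⟩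

theorem tsum_decode₂_bind {ι β : Type*} [Encodable ι] (F : Option β → ℝ≥0∞) (hF : F none = 0)
    (f : ι → Option β) :
    ∑' n, F ((Encodable.decode₂ ι n).bind f) = ∑' i, F (f i) := by
  rw [← (Encodable.encode_injective (α := ι)).tsum_eq]
  · simp
  · intro n hn
    by_contra hrange
    have : Encodable.decode₂ ι n = none :=
      Option.eq_none_iff_forall_not_mem.2 fun i hi =>
        hrange ⟨i, Encodable.mem_decode₂.1 hi⟩
    exact hn (by simp [this, hF])

theorem UniversalPrefixFree.exists_cpx_le_of_tsum_le_one (hU : UniversalPrefixFree U) {ι : Type*}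
    [Primcodable ι] {f : ι → Option (ℕ × BStr)} (hf : Computable f)
    (hsum : ∑' i, (weight ((f i).map Prod.fst) : ℝ≥0∞) ≤ 1) :
    ∃ c, ∀ i r x, f i = some (r, x) → cpx U x ≤ r + c := by
  let f' (n : ℕ) : Option (ℕ × BStr) := (Encodable.decode₂ ι n).bind f
  have hf' : Computable f' := Primrec.decode₂.to_comp.option_bind (hf.comp Computable.snd).to₂
  have hsum' : ∑' n, (weight ((f' n).map Prod.fst) : ℝ≥0∞) ≤ 1 := by
    rwa [tsum_decode₂_bind (fun y => (weight (y.map Prod.fst) : ℝ≥0∞)) (by simp)]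
  obtain ⟨c, hc⟩ := hU.2.2 _ (Partrec.rfindOpt (computable_requestAnswer hf'))
    prefixFreeDom_rfindOpt_requestAnswer
  refine ⟨1 + c, fun i r x h => ?_⟩
  obtain ⟨p, hp, hanswer⟩ := exists_requestAnswer_eq_some hsum'
    (i := Encodable.encode i) (r := r) (x := x) (by simpa [f'] using h)
  obtain ⟨q, hq, hx⟩ := hc p x (mem_rfindOpt_requestAnswer.2 ⟨_, hanswer⟩)
  exact (cpx_le_length hx).trans (by omega)

theorem UniversalPrefixFree.exists_mem (hU : UniversalPrefixFree U) (x : BStr) :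
    ∃ p, x ∈ U p := by
  let M (p : BStr) : Option BStr := if p = [] then some x else none
  have hM : Computable M := by fun_prop
  have hdom {p : BStr} (hp : (M p : Part BStr).Dom) : p = [] := by
    by_contra h
    simp [M, h] at hp
  obtain ⟨c, hc⟩ := hU.2.2 (fun p => M p) hM.ofOption
    fun p q hp hq _ => (hdom hp).trans (hdom hq).symm
  obtain ⟨q, -, hq⟩ := hc [] x (by simp [M])
  exact ⟨q, hq⟩

theorem UniversalPrefixFree.exists_length_eq_cpx (hU : UniversalPrefixFree U) (x : BStr) :
    ∃ p : BStr, p.length = cpx U x ∧ x ∈ U p :=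
  Nat.sInf_mem (s := {n | ∃ p : BStr, p.length = n ∧ x ∈ U p})
    ((hU.exists_mem x).imp' List.length fun p hp => ⟨p, rfl, hp⟩)

theorem UniversalPrefixFree.exists_cpx_comp_le (hU : UniversalPrefixFree U) {g : BStr → BStr}
    (hg : Computable g) : ∃ c, ∀ x, cpx U (g x) ≤ cpx U x + c := by
  obtain ⟨c, hc⟩ := hU.2.2 (fun p => (U p).map g) (hU.1.map (hg.comp Computable.snd).to₂) hU.2.1
  refine ⟨c, fun x => ?_⟩
  obtain ⟨p, hp, hx⟩ := hU.exists_length_eq_cpx x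
  obtain ⟨q, hq, hgx⟩ := hc p (g x) (Part.mem_map g hx)
  exact (cpx_le_length hgx).trans (hp ▸ hq)

end Complexity

/-! ### Enumerating programs -/

section Enumeration

variable {α β σ : Type*} [Primcodable α] [Primcodable β] [Primcodable σ]

/-- `e` is a computable listing, without repetitions, of the graph of the partial function `f`. -/
structure EnumeratesGraph (f : α →. σ) (e : ℕ → Option (α × σ)) : Prop where
  computable : Computable e
  mem_iff : ∀ a y, y ∈ f a ↔ ∃ s, e s = some (a, y)
  injective : ∀ s t z, e s = some z → e t = some z → s = t

theorem exists_computable_stages {f : α →. σ} (hf : Partrec f) :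
    ∃ g : α × ℕ → Option σ, Computable g ∧ ∀ a y, y ∈ f a ↔ ∃ k, g (a, k) = some y := by
  obtain ⟨c, hc⟩ := Nat.Partrec.Code.exists_code.1 hf
  have heval (a : α) (v : ℕ) :
      (∃ k, v ∈ c.evaln k (Encodable.encode a)) ↔ ∃ y ∈ f a, Encodable.encode y = v := by
    rw [← Nat.Partrec.Code.evaln_complete, hc]
    simp
  refine ⟨fun q => (c.evaln q.2 (Encodable.encode q.1)).bind Encodable.decode, ?_, fun a y => ?_⟩
  · have harg : Computable fun q : α × ℕ => ((q.2, c), Encodable.encode q.1) := by fun_prop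
    have hevaln := Nat.Partrec.Code.primrec_evaln.to_comp.comp harg
    fun_prop
  · simp only [Option.bind_eq_some_iff]
    constructor
    · intro hy
      obtain ⟨k, hk⟩ := (heval a _).2 ⟨y, hy, rfl⟩
      exact ⟨k, _, hk, Encodable.encodek y⟩
    · rintro ⟨k, v, hv, hy⟩
      obtain ⟨y', hy', rfl⟩ := (heval a v).1 ⟨k, hv⟩
      rw [Encodable.encodek] at hy
      rwa [← Option.some_injective _ hy]

theorem exists_computable_enumeration_without_repetition {e : ℕ → Option β}
    (he : Computable e) :
    ∃ e' : ℕ → Option β, Computable e' ∧ (∀ y, (∃ s, e s = some y) ↔ ∃ s, e' s = some y) ∧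
      ∀ s t y, e' s = some y → e' t = some y → s = t := by
  classical
  let earlier (s : ℕ) : ℕ := ∑ t ∈ range s, if e t = e s then 1 else 0
  have hearlier (s : ℕ) : earlier s = 0 ↔ ∀ t < s, e t ≠ e s := by
    simp [earlier]
  let e' (s : ℕ) : Option β := if earlier s = 0 then e s else none
  have he' {s : ℕ} {y : β} : e' s = some y ↔ (∀ t < s, e t ≠ e s) ∧ e s = some y := by
    simp only [e', Option.ite_none_right_eq_some, hearlier]
  refine ⟨e', by fun_prop, fun y => ⟨fun h => ?_, fun ⟨s, hs⟩ => ⟨s, (he'.1 hs).2⟩⟩, ?_⟩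
  · refine ⟨Nat.find h, he'.2 ⟨fun t ht => ?_, Nat.find_spec h⟩⟩
    rw [Nat.find_spec h]
    exact Nat.find_min h ht
  · intro s t y hs ht
    obtain ⟨hs_first, hs⟩ := he'.1 hs
    obtain ⟨ht_first, ht⟩ := he'.1 ht
    have hst : e s = e t := hs.trans ht.symm
    exact le_antisymm (not_lt.1 fun h => hs_first t h hst.symm) (not_lt.1 fun h => ht_first s h hst)

theorem exists_enumeratesGraph {f : α →. σ} (hf : Partrec f) : ∃ e, EnumeratesGraph f e := by
  obtain ⟨g, hg, hmem⟩ := exists_computable_stages hf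
  let e (n : ℕ) : Option (α × σ) :=
    (Encodable.decode (α := α × ℕ) n).bind fun q => (g q).map fun y => (q.1, y)
  have he : Computable e := by fun_prop
  obtain ⟨e', he', hvalues, hinj⟩ := exists_computable_enumeration_without_repetition he
  refine ⟨e', he', fun a y => ?_, hinj⟩
  rw [hmem, ← hvalues]
  constructor
  · rintro ⟨k, hk⟩
    exact ⟨Encodable.encode (a, k), by simp [e, hk]⟩
  · rintro ⟨n, hn⟩
    simp only [e, Option.bind_eq_some_iff, Option.map_eq_some_iff, Prod.mk.injEq] at hn
    obtain ⟨⟨_, k⟩, -, _, hk, rfl, rfl⟩ := hn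
    exact ⟨k, hk⟩

end Enumeration

/-! ### Kraft's inequality and the coding theorem -/

section Kraft

theorem uniquelyDecodable_of_isAntichain_isPrefix {α : Type*} {S : Set (List α)}
    (hS : IsAntichain (· <+: ·) S) (hnil : [] ∉ S) : InformationTheory.UniquelyDecodable S := by
  intro L₁
  induction L₁ with
  | nil =>
    rintro (_ | ⟨b, L₂⟩) - h₂ h
    · rfl
    · exact absurd (List.append_eq_nil_iff.1 h.symm).1 fun hb => hnil (hb ▸ h₂ b (by simp))
  | cons a L₁ ih =>
    rintro (_ | ⟨b, L₂⟩) h₁ h₂ h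
    · exact absurd (List.append_eq_nil_iff.1 h).1 fun ha => hnil (ha ▸ h₁ a (by simp))
    · rw [List.forall_mem_cons] at h₁ h₂
      rw [List.flatten_cons, List.flatten_cons] at h
      have hab : a = b := by
        rcases List.prefix_or_prefix_of_prefix (List.prefix_append a L₁.flatten)
          (h ▸ List.prefix_append b L₂.flatten) with hpre | hpre
        · exact hS.eq h₁.1 h₂.1 hpre
        · exact (hS.eq h₂.1 h₁.1 hpre).symm
      subst hab
      rw [ih L₂ h₁.2 h₂.2 (List.append_cancel_left h)]

theorem sum_inv_card_pow_length_le_one {α : Type*} [Fintype α] [Nonempty α] {S : Finset (List α)}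
    (hS : IsAntichain (· <+: ·) (S : Set (List α))) :
    ∑ p ∈ S, (1 / Fintype.card α : ℝ) ^ p.length ≤ 1 := by
  by_cases hnil : [] ∈ S
  · have hsingle : S = {[]} := Finset.eq_singleton_iff_unique_mem.2
      ⟨hnil, fun q hq => (hS.eq hnil hq List.nil_prefix).symm⟩
    simp [hsingle]
  · exact InformationTheory.kraft_mcmillan_inequality
      (uniquelyDecodable_of_isAntichain_isPrefix hS hnil)

theorem tsum_weight_length_le_one {S : Set BStr} (hS : IsAntichain (· <+: ·) S) :
    ∑' p : S, (weight (some p.1.length) : ℝ≥0∞) ≤ 1 := by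
  refine ENNReal.summable.tsum_le_of_sum_le fun T => ?_
  have hT := sum_inv_card_pow_length_le_one (S := T.map (Function.Embedding.subtype _))
    (hS.subset (Finset.map_subtype_subset T))
  rw [Finset.sum_map] at hT
  rw [← ENNReal.ofNNReal_finsetSum, ENNReal.coe_le_one_iff, ← NNReal.coe_le_coe]
  simpa using hT

variable {U : BStr →. BStr} {e : ℕ → Option (BStr × BStr)}

theorem EnumeratesGraph.tsum_weight_le_one (he : EnumeratesGraph U e) (hU : PrefixFreeDom U) :
    ∑' s, (weight ((e s).map fun y => y.1.length) : ℝ≥0∞) ≤ 1 := by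
  let T : Set ℕ := {s | (e s).isSome}
  have hanti : IsAntichain (· <+: ·) {p | (U p).Dom} := fun p hp q hq hne hpq =>
    hne (hU p q hp hq hpq)
  have hvalue (s : T) : e s = some ((e s).get s.2) := (Option.some_get s.2).symm
  have hmem (s : T) : ((e s).get s.2).2 ∈ U ((e s).get s.2).1 := (he.mem_iff _ _).2 ⟨s, hvalue s⟩
  let program (s : T) : {p | (U p).Dom} := ⟨((e s).get s.2).1, Part.dom_iff_mem.2 ⟨_, hmem s⟩⟩
  have hinj : Function.Injective program := by
    intro s t hst
    have h₁ : ((e s).get s.2).1 = ((e t).get t.2).1 := congrArg Subtype.val hst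
    have h₂ : ((e s).get s.2).2 = ((e t).get t.2).2 := Part.mem_unique (hmem s) (h₁ ▸ hmem t)
    exact Subtype.ext (he.injective s t _ (hvalue s) (Prod.ext h₁ h₂ ▸ hvalue t))
  calc ∑' s, (weight ((e s).map fun y => y.1.length) : ℝ≥0∞)
      = ∑' s : T, (weight ((e s).map fun y => y.1.length) : ℝ≥0∞) := by
        refine (tsum_subtype_eq_of_support_subset fun s hs => ?_).symm
        by_contra h
        exact hs (by simp [Option.not_isSome_iff_eq_none.1 h])
    _ = ∑' s : T, (weight (some (program s).1.length) : ℝ≥0∞) := by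
        refine tsum_congr fun s => ?_
        rw [hvalue s]; rfl
    _ ≤ ∑' p : {p | (U p).Dom}, (weight (some p.1.length) : ℝ≥0∞) :=
        ENNReal.tsum_comp_le_tsum_of_injective hinj _
    _ ≤ 1 := tsum_weight_length_le_one hanti

end Kraft

section Coding

/-- Stage `t` is the one at which the partial weights of `g` first exceed `B`. -/
def Crosses (g : ℕ → Option ℕ) (B : ℝ≥0) (t : ℕ) : Prop :=
  partialWeight g t ≤ B ∧ ¬partialWeight g (t + 1) ≤ B

theorem exists_crosses {g : ℕ → Option ℕ} {B : ℝ≥0} {s : ℕ} (h : B < partialWeight g s) :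
    ∃ t, Crosses g B t := by
  induction s with
  | zero => simp [partialWeight_zero] at h
  | succ s ih =>
    by_cases hs : B < partialWeight g s
    · exact ih hs
    · exact ⟨s, not_lt.1 hs, h.not_ge⟩

theorem Crosses.eq {g : ℕ → Option ℕ} {B : ℝ≥0} {s t : ℕ} (hs : Crosses g B s)
    (ht : Crosses g B t) : s = t := by
  have hst : ¬s < t := fun h => hs.2 ((partialWeight_mono g h).trans ht.1)
  have hts : ¬t < s := fun h => ht.2 ((partialWeight_mono g h).trans hs.1)
  omega

theorem tsum_two_inv_pow_of_lt_le (P : ℝ≥0∞) :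
    ∑' k : ℕ, (if 2⁻¹ ^ k < P then 2⁻¹ ^ (k + 1) else 0) ≤ P := by
  have hhalf (n : ℕ) : (2⁻¹ ^ (n + 1) + 2⁻¹ ^ (n + 1) : ℝ≥0∞) = 2⁻¹ ^ n := by
    rw [pow_succ, ← mul_add, ENNReal.inv_two_add_inv_two, mul_one]
  let S (n : ℕ) : ℝ≥0∞ := ∑ k ∈ range n, if 2⁻¹ ^ k < P then 2⁻¹ ^ (k + 1) else 0
  have invariant (n : ℕ) : S n = 0 ∨ S n + 2⁻¹ ^ n ≤ P := by
    induction n with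
    | zero => exact .inl rfl
    | succ n ih =>
      have hsucc : S (n + 1) = S n + if 2⁻¹ ^ n < P then 2⁻¹ ^ (n + 1) else 0 :=
        Finset.sum_range_succ _ _
      by_cases h : 2⁻¹ ^ n < P
      · rw [hsucc, if_pos h, add_assoc, hhalf]
        exact .inr (ih.elim (fun h₀ => by rw [h₀, zero_add]; exact h.le) id)
      · rw [hsucc, if_neg h, add_zero]
        refine ih.imp id fun hle => le_trans ?_ hle
        gcongr S n + ?_
        exact le_self_add.trans (hhalf n).le
  refine ENNReal.tsum_le_of_sum_range_le fun n => ?_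
  exact (invariant n).elim (fun h => h.trans_le zero_le) le_self_add.trans

open Classical in
/-- The requests behind the coding theorem: ask for a description of `x` of length `k + 1` at the
stage at which the partial weights `h x` first exceed `2^{-k}`. -/
noncomputable def codingRequest (h : BStr → ℕ → Option ℕ) (i : BStr × ℕ × ℕ) :
    Option (ℕ × BStr) :=
  if Crosses (h i.1) (2⁻¹ ^ i.2.1) i.2.2 then some (i.2.1 + 1, i.1) else none

theorem computable_codingRequest {h : BStr → ℕ → Option ℕ}
    (hh : Computable fun q : BStr × ℕ => h q.1 q.2) : Computable (codingRequest h) := by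
  unfold codingRequest Crosses
  fun_prop

theorem tsum_weight_codingRequest_le (h : BStr → ℕ → Option ℕ) (x : BStr) (k : ℕ) :
    ∑' s, (weight ((codingRequest h (x, k, s)).map Prod.fst) : ℝ≥0∞) ≤
      if 2⁻¹ ^ k < ∑' s, (weight (h x s) : ℝ≥0∞) then 2⁻¹ ^ (k + 1) else 0 := by
  by_cases hex : ∃ t, Crosses (h x) (2⁻¹ ^ k) t
  · obtain ⟨t, ht⟩ := hex
    have hlt : 2⁻¹ ^ k < ∑' s, (weight (h x s) : ℝ≥0∞) := by
      refine lt_of_lt_of_le ?_ (coe_partialWeight_le_tsum (h x) (t + 1))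
      rw [← coe_two_inv_pow]
      exact ENNReal.coe_lt_coe.2 (not_le.1 ht.2)
    have hother (s : ℕ) (hs : s ≠ t) : codingRequest h (x, k, s) = none :=
      if_neg fun hcross => hs (Crosses.eq hcross ht)
    have hself : codingRequest h (x, k, t) = some (k + 1, x) := if_pos ht
    rw [if_pos hlt, tsum_eq_single t fun s hs => by simp [hother s hs], hself]
    exact (coe_two_inv_pow _).le
  · have hnone (s : ℕ) : codingRequest h (x, k, s) = none :=
      if_neg fun hs => hex ⟨s, hs⟩
    simp [hnone]

theorem UniversalPrefixFree.exists_partialWeight_le {U : BStr →. BStr}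
    (hU : UniversalPrefixFree U) {h : BStr → ℕ → Option ℕ}
    (hh : Computable fun q : BStr × ℕ => h q.1 q.2)
    (hsum : ∑' x, ∑' s, (weight (h x s) : ℝ≥0∞) ≤ 1) :
    ∃ C, ∀ x s, partialWeight (h x) s ≤ 2 ^ C * 2⁻¹ ^ cpx U x := by
  obtain ⟨c, hc⟩ := hU.exists_cpx_le_of_tsum_le_one (computable_codingRequest hh) <|
    calc ∑' i, (weight ((codingRequest h i).map Prod.fst) : ℝ≥0∞)
        = ∑' x, ∑' k, ∑' s, (weight ((codingRequest h (x, k, s)).map Prod.fst) : ℝ≥0∞) := by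
          simp only [ENNReal.tsum_prod']
      _ ≤ ∑' x, ∑' s, (weight (h x s) : ℝ≥0∞) := ENNReal.tsum_le_tsum fun x =>
          (ENNReal.tsum_le_tsum (tsum_weight_codingRequest_le h x)).trans
            (tsum_two_inv_pow_of_lt_le _)
      _ ≤ 1 := hsum
  refine ⟨c + 2, fun x s => ?_⟩
  rcases le_total (cpx U x) (c + 2) with hle | hle
  · have hone : (partialWeight (h x) s : ℝ≥0∞) ≤ 1 :=
      (coe_partialWeight_le_tsum (h x) s).trans ((ENNReal.le_tsum x).trans hsum)
    calc partialWeight (h x) s ≤ 1 := by exact_mod_cast hone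
      _ = 2 ^ (c + 2) * 2⁻¹ ^ (c + 2) := by simp
      _ ≤ 2 ^ (c + 2) * 2⁻¹ ^ cpx U x :=
        mul_le_mul_right (pow_le_pow_of_le_one zero_le (by norm_num) hle) _
  · obtain ⟨k, hk⟩ := Nat.exists_eq_add_of_le hle
    have hscale : (2 ^ (c + 2) * 2⁻¹ ^ cpx U x : ℝ≥0) = 2⁻¹ ^ k := by
      rw [hk, pow_add _ (c + 2) k, ← mul_assoc, ← mul_pow]
      simp
    rw [hscale]
    by_contra! hlt
    obtain ⟨t, ht⟩ := exists_crosses hlt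
    have hrequest : codingRequest h (x, k, t) = some (k + 1, x) := if_pos ht
    have := hc _ _ _ hrequest
    omega

end Coding

/-! ### Pairs of strings in a common fibre -/

section Fiber

variable {U : BStr →. BStr} {φ : BStr → BStr} {e : ℕ → Option (BStr × BStr)}

/-- The length of the `s`-th listed program, provided that `φ` maps its output to `m`. -/
def fiberLength (φ : BStr → BStr) (e : ℕ → Option (BStr × BStr)) (m : BStr) (s : ℕ) : Option ℕ :=
  (e s).bind fun y => if φ y.2 = m then some y.1.length else none

theorem tsum_weight_fiberLength (φ : BStr → BStr) (e : ℕ → Option (BStr × BStr)) :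
    ∑' m, ∑' s, (weight (fiberLength φ e m s) : ℝ≥0∞) =
      ∑' s, (weight ((e s).map fun y => y.1.length) : ℝ≥0∞) := by
  rw [ENNReal.tsum_comm]
  refine tsum_congr fun s => ?_
  cases h : e s with
  | none => simp [fiberLength, h]
  | some y =>
    rw [tsum_eq_single (φ y.2) fun m hm => by simp [fiberLength, h, hm.symm]]
    simp [fiberLength, h]

theorem EnumeratesGraph.exists_partialWeight_fiberLength_le (he : EnumeratesGraph U e)
    (hU : UniversalPrefixFree U) (hφ : Computable φ) :
    ∃ C, ∀ m s, partialWeight (fiberLength φ e m) s ≤ 2 ^ C * 2⁻¹ ^ cpx U m := by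
  refine hU.exists_partialWeight_le ?_
    ((tsum_weight_fiberLength φ e).trans_le (he.tsum_weight_le_one hU.2.1))
  have := he.computable
  unfold fiberLength
  fun_prop

theorem tsum_ite_partialWeight_le (g : ℕ → Option ℕ) (B : ℝ≥0) :
    ∑' s, ((if partialWeight g (s + 1) ≤ B then weight (g s) else 0 : ℝ≥0) : ℝ≥0∞) ≤ B := by
  refine ENNReal.tsum_le_of_sum_range_le fun n => ?_
  rw [← ENNReal.ofNNReal_finsetSum, ENNReal.coe_le_coe]
  induction n with
  | zero => simp
  | succ n ih =>
    by_cases h : partialWeight g (n + 1) ≤ B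
    · exact (Finset.sum_le_sum fun s _ => ite_le_sup _ _ _).trans (by simpa [partialWeight] using h)
    · rw [Finset.sum_range_succ, if_neg h, add_zero]
      exact ih

open Classical in
/-- The `s`-th listed computation, provided that `φ` maps its output to `m` and that the programs
listed so far with this property have total weight at most `B`. -/
noncomputable def cappedFiber (φ : BStr → BStr) (e : ℕ → Option (BStr × BStr)) (m : BStr)
    (B : ℝ≥0) (s : ℕ) : Option (BStr × BStr) :=
  (e s).bind fun y =>
    if φ y.2 = m ∧ partialWeight (fiberLength φ e m) (s + 1) ≤ B then some y else none

theorem cappedFiber_eq_some {m : BStr} {B : ℝ≥0} {s : ℕ} {y : BStr × BStr} :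
    cappedFiber φ e m B s = some y ↔
      e s = some y ∧ φ y.2 = m ∧ partialWeight (fiberLength φ e m) (s + 1) ≤ B := by
  simp only [cappedFiber, Option.bind_eq_some_iff, Option.ite_none_right_eq_some,
    Option.some.injEq]
  constructor
  · rintro ⟨_, h, hy, rfl⟩
    exact ⟨h, hy⟩
  · rintro ⟨h, hy⟩
    exact ⟨y, h, hy, rfl⟩

theorem tsum_weight_cappedFiber_le (φ : BStr → BStr) (e : ℕ → Option (BStr × BStr)) (m : BStr)
    (B : ℝ≥0) :
    ∑' s, (weight ((cappedFiber φ e m B s).map fun y => y.1.length) : ℝ≥0∞) ≤ B := by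
  refine le_trans (ENNReal.tsum_le_tsum fun s => ?_)
    (tsum_ite_partialWeight_le (fiberLength φ e m) B)
  rw [ENNReal.coe_le_coe]
  cases h : cappedFiber φ e m B s with
  | none => simp
  | some y =>
    obtain ⟨hs, hy, hB⟩ := cappedFiber_eq_some.1 h
    simp [hB, fiberLength, hs, hy]

theorem le_length_add_of_cappedFiber_eq_some {m : BStr} {n C s : ℕ} {y : BStr × BStr}
    (h : cappedFiber φ e m (2 ^ C * 2⁻¹ ^ n) s = some y) : n ≤ y.1.length + C := by
  obtain ⟨hs, hy, hB⟩ := cappedFiber_eq_some.1 h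
  have hweight : weight (fiberLength φ e m s) = 2⁻¹ ^ y.1.length := by
    simp [fiberLength, hs, hy]
  have hle : (2⁻¹ ^ y.1.length : ℝ≥0) ≤ 2 ^ C * 2⁻¹ ^ n := by
    rw [← hweight]
    exact le_trans (by rw [partialWeight_succ]; exact le_add_self) hB
  have hpow : (2⁻¹ ^ (y.1.length + C) : ℝ≥0) ≤ 2⁻¹ ^ n := by
    calc (2⁻¹ ^ (y.1.length + C) : ℝ≥0) = 2⁻¹ ^ y.1.length * 2⁻¹ ^ C := pow_add _ _ _
      _ ≤ 2 ^ C * 2⁻¹ ^ n * 2⁻¹ ^ C := by gcongr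
      _ = (2 * 2⁻¹) ^ C * 2⁻¹ ^ n := by rw [mul_pow]; ring
      _ = 2⁻¹ ^ n := by simp
  exact (pow_le_pow_iff_right_of_lt_one₀ (by positivity)
    (inv_lt_one_of_one_lt₀ one_lt_two)).1 hpow

/-- The requests for descriptions of `g x x'` from programs `p` of `m` and `u`, `v` of elements
`x`, `x'` of the fibre of `φ` over `m`. The programs `u` and `v` have to respect the bound
`2^{C - |p|}` on the weight of the fibre, which makes up for the factor `2^{|p|}` in the weight of
the request. -/
noncomputable def pairRequest (φ : BStr → BStr) (g : BStr → BStr → BStr)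
    (e : ℕ → Option (BStr × BStr)) (C : ℕ) (i : ℕ × ℕ × ℕ) : Option (ℕ × BStr) :=
  (e i.1).bind fun y =>
    (cappedFiber φ e y.2 (2 ^ C * 2⁻¹ ^ y.1.length) i.2.1).bind fun u =>
      (cappedFiber φ e y.2 (2 ^ C * 2⁻¹ ^ y.1.length) i.2.2).map fun v =>
        (u.1.length + v.1.length + 2 * C - y.1.length, g u.2 v.2)

variable {g : BStr → BStr → BStr}

theorem computable_pairRequest (he : Computable e) (hφ : Computable φ)
    (hg : Computable fun q : BStr × BStr => g q.1 q.2) (C : ℕ) :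
    Computable (pairRequest φ g e C) := by
  have hC : (2 ^ C : ℝ≥0) = (2 ^ C : ℕ) := by simp
  unfold pairRequest cappedFiber fiberLength
  rw [hC]
  fun_prop

theorem weight_pairRequest_le (g : BStr → BStr → BStr) {C a : ℕ} {y : BStr × BStr}
    (ha : e a = some y) (b c : ℕ) :
    weight ((pairRequest φ g e C (a, b, c)).map Prod.fst) ≤ 2 ^ y.1.length * 2⁻¹ ^ (2 * C) *
      (weight ((cappedFiber φ e y.2 (2 ^ C * 2⁻¹ ^ y.1.length) b).map fun u => u.1.length) *
        weight ((cappedFiber φ e y.2 (2 ^ C * 2⁻¹ ^ y.1.length) c).map fun v => v.1.length)) := by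
  cases hu : cappedFiber φ e y.2 (2 ^ C * 2⁻¹ ^ y.1.length) b with
  | none => simp only [pairRequest, ha, hu, Option.bind_some, Option.bind_none, Option.map_none,
      weight_none, zero_le]
  | some u =>
    cases hv : cappedFiber φ e y.2 (2 ^ C * 2⁻¹ ^ y.1.length) c with
    | none => simp only [pairRequest, ha, hu, hv, Option.bind_some, Option.map_none, weight_none,
        zero_le]
    | some v =>
      have hle := le_length_add_of_cappedFiber_eq_some hu
      obtain ⟨d, hd⟩ : ∃ d, u.1.length + v.1.length + 2 * C = y.1.length + d :=
        Nat.exists_eq_add_of_le (by omega)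
      have hrequest : (pairRequest φ g e C (a, b, c)).map Prod.fst = some d := by
        simp only [pairRequest, ha, hu, hv, hd, Option.bind_some, Option.map_some,
          Nat.add_sub_cancel_left]
      rw [hrequest]
      simp only [Option.map_some, weight_some]
      apply le_of_eq
      calc (2⁻¹ ^ d : ℝ≥0) = (2 * 2⁻¹) ^ y.1.length * 2⁻¹ ^ d := by simp
        _ = 2 ^ y.1.length * 2⁻¹ ^ (y.1.length + d) := by rw [mul_pow, pow_add]; ring
        _ = _ := by rw [← hd]; ring

theorem tsum_weight_pairRequest_le (φ : BStr → BStr) (g : BStr → BStr → BStr)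
    (e : ℕ → Option (BStr × BStr)) (C a : ℕ) :
    ∑' b, ∑' c, (weight ((pairRequest φ g e C (a, b, c)).map Prod.fst) : ℝ≥0∞) ≤
      weight ((e a).map fun y => y.1.length) := by
  cases ha : e a with
  | none => simp [pairRequest, ha]
  | some y =>
    let B : ℝ≥0 := 2 ^ C * 2⁻¹ ^ y.1.length
    let K : ℝ≥0 := 2 ^ y.1.length * 2⁻¹ ^ (2 * C)
    let w (s : ℕ) : ℝ≥0 := weight ((cappedFiber φ e y.2 B s).map fun u => u.1.length)
    have hw : ∑' s, (w s : ℝ≥0∞) ≤ B := tsum_weight_cappedFiber_le φ e y.2 B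
    have hKB : K * (B * B) = 2⁻¹ ^ y.1.length := by
      calc K * (B * B) = (2 * 2⁻¹) ^ (2 * C) * (2 * 2⁻¹) ^ y.1.length * 2⁻¹ ^ y.1.length := by
            rw [mul_pow, mul_pow]; ring
        _ = 2⁻¹ ^ y.1.length := by simp
    have hterm (b c : ℕ) : weight ((pairRequest φ g e C (a, b, c)).map Prod.fst) ≤
        K * (w b * w c) := weight_pairRequest_le g ha b c
    calc ∑' b, ∑' c, (weight ((pairRequest φ g e C (a, b, c)).map Prod.fst) : ℝ≥0∞)
        ≤ ∑' b, ∑' c, (K * (w b * w c) : ℝ≥0∞) := by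
          gcongr with b c
          exact_mod_cast hterm b c
      _ = K * ((∑' b, (w b : ℝ≥0∞)) * ∑' c, (w c : ℝ≥0∞)) := by
          simp only [ENNReal.tsum_mul_left, ENNReal.tsum_mul_right]
      _ ≤ K * (B * B) := by gcongr
      _ = weight (some y.1.length) := by
          rw [weight_some, ← hKB]
          push_cast
          rfl

theorem UniversalPrefixFree.exists_cpx_add_cpx_le (hU : UniversalPrefixFree U)
    (hφ : Computable φ) (hg : Computable fun q : BStr × BStr => g q.1 q.2) :
    ∃ c, ∀ x y, φ x = φ y → cpx U (g x y) + cpx U (φ x) ≤ cpx U x + cpx U y + c := by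
  obtain ⟨e, he⟩ := exists_enumeratesGraph hU.1
  obtain ⟨C, hC⟩ := he.exists_partialWeight_fiberLength_le hU hφ
  obtain ⟨c, hc⟩ := hU.exists_cpx_le_of_tsum_le_one
    (computable_pairRequest he.computable hφ hg C) <|
    calc ∑' i, (weight ((pairRequest φ g e C i).map Prod.fst) : ℝ≥0∞)
        = ∑' a, ∑' b, ∑' c, (weight ((pairRequest φ g e C (a, b, c)).map Prod.fst) : ℝ≥0∞) := by
          simp only [ENNReal.tsum_prod']
      _ ≤ ∑' a, (weight ((e a).map fun y => y.1.length) : ℝ≥0∞) :=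
          ENNReal.tsum_le_tsum (tsum_weight_pairRequest_le φ g e C)
      _ ≤ 1 := he.tsum_weight_le_one hU.2.1
  refine ⟨2 * C + c, fun x y hxy => ?_⟩
  have listed (z : BStr) : ∃ p s, p.length = cpx U z ∧ e s = some (p, z) := by
    obtain ⟨p, hp, hz⟩ := hU.exists_length_eq_cpx z
    obtain ⟨s, hs⟩ := (he.mem_iff p z).1 hz
    exact ⟨p, s, hp, hs⟩
  obtain ⟨p, a, hp, ha⟩ := listed (φ x)
  obtain ⟨u, b, hu, hb⟩ := listed x
  obtain ⟨v, b', hv, hb'⟩ := listed y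
  have hcap (s : ℕ) : partialWeight (fiberLength φ e (φ x)) s ≤ 2 ^ C * 2⁻¹ ^ p.length :=
    hp ▸ hC (φ x) s
  have hcapu : cappedFiber φ e (φ x) (2 ^ C * 2⁻¹ ^ p.length) b = some (u, x) :=
    cappedFiber_eq_some.2 ⟨hb, rfl, hcap _⟩
  have hcapv : cappedFiber φ e (φ x) (2 ^ C * 2⁻¹ ^ p.length) b' = some (v, y) :=
    cappedFiber_eq_some.2 ⟨hb', hxy.symm, hcap _⟩
  have hrequest : pairRequest φ g e C (a, b, b') =
      some (u.length + v.length + 2 * C - p.length, g x y) := by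
    simp only [pairRequest, ha, hcapu, hcapv, Option.bind_some, Option.map_some]
  have hlength : p.length ≤ u.length + C := le_length_add_of_cappedFiber_eq_some hcapu
  have hrequested := hc _ _ _ hrequest
  omega

end Fiber

/-! ### Interleaving -/

section Interleave

variable {U : BStr →. BStr}

theorem length_seg (Z : Cantor) (n : ℕ) : (seg Z n).length = n :=
  List.length_ofFn

theorem length_numStr (n : ℕ) : (numStr n).length = n :=
  List.length_replicate

theorem seg_eq_map_range (Z : Cantor) (n : ℕ) : seg Z n = (List.range n).map Z := by
  apply List.ext_getElem <;> simp [seg]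

theorem getD_seg {Z : Cantor} {m i : ℕ} (hi : i < m) : (seg Z m).getD i false = Z i := by
  rw [List.getD_eq_getElem _ _ (by rwa [length_seg])]
  simp [seg]

/-- The finite version of `join`: the string `x₀ y₀ x₁ y₁ ⋯` of length `2 |x|`. -/
def interleave (x y : BStr) : BStr :=
  seg (join (fun i => x.getD i false, fun i => y.getD i false)) (2 * x.length)

theorem computable_interleave : Computable fun q : BStr × BStr => interleave q.1 q.2 := by
  have getD {α : Type} [Primcodable α] {x : α → BStr} {i : α → ℕ} (hx : Computable x)
      (hi : Computable i) : Computable fun a => (x a).getD (i a) false :=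
    (Primrec.list_getD false).to_comp.comp hx hi
  simp only [interleave, seg_eq_map_range]
  exact computable_list_map_range (computable_ite (by fun_prop)
    (getD (by fun_prop) (by fun_prop)) (getD (by fun_prop) (by fun_prop))) (by fun_prop)

theorem interleave_seg (A B : Cantor) (m : ℕ) :
    interleave (seg A m) (seg B m) = seg (join (A, B)) (2 * m) := by
  simp only [interleave, length_seg, seg_eq_map_range _ (2 * m)]
  refine List.map_congr_left fun i hi => ?_
  have hi : i / 2 < m := by have := List.mem_range.1 hi; omega
  simp only [_root_.join, getD_seg hi]

@[fun_prop]
theorem computable_numStr : Computable numStr := by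
  have h : Computable fun n => (List.range n).map fun _ => false := by fun_prop
  exact h.of_eq fun n => by simp [numStr]

theorem dropLast_seg (Z : Cantor) (n : ℕ) : (seg Z (n + 1)).dropLast = seg Z n := by
  simp [seg_eq_map_range, List.range_succ]

theorem computable_dropLast : Computable (List.dropLast : BStr → BStr) := by
  have h : Computable fun x : BStr => x.reverse.tail.reverse :=
    Computable.list_reverse.comp (Primrec.list_tail.to_comp.comp Computable.list_reverse)
  exact h.of_eq fun x => by simp

theorem UniversalPrefixFree.exists_cpxN_comp_le (hU : UniversalPrefixFree U) {f : ℕ → ℕ}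
    (hf : Computable f) : ∃ c, ∀ n, cpxN U (f n) ≤ cpxN U n + c := by
  obtain ⟨c, hc⟩ := hU.exists_cpx_comp_le (g := fun x => numStr (f x.length)) (by fun_prop)
  exact ⟨c, fun n => by simpa only [cpxN, length_numStr] using hc (numStr n)⟩

theorem UniversalPrefixFree.exists_cpx_seg_two_mul_half_le (hU : UniversalPrefixFree U) :
    ∃ c, ∀ Z n, cpx U (seg Z n) ≤ cpx U (seg Z (2 * ((n + 1) / 2))) + c := by
  obtain ⟨c, hc⟩ := hU.exists_cpx_comp_le computable_dropLast
  refine ⟨c, fun Z n => ?_⟩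
  obtain ⟨k, rfl | rfl⟩ := n.even_or_odd'
  · rw [show 2 * ((2 * k + 1) / 2) = 2 * k by omega]
    exact Nat.le_add_right _ _
  · rw [show 2 * ((2 * k + 1 + 1) / 2) = 2 * k + 1 + 1 by omega, ← dropLast_seg]
    exact hc _

theorem UniversalPrefixFree.exists_cpx_seg_join_add_cpxN_le (hU : UniversalPrefixFree U) :
    ∃ c, ∀ A B n, cpx U (seg (join (A, B)) n) + cpxN U ((n + 1) / 2) ≤
      cpx U (seg A ((n + 1) / 2)) + cpx U (seg B ((n + 1) / 2)) + c := by
  obtain ⟨c, hc⟩ := hU.exists_cpx_add_cpx_le (φ := fun x => numStr x.length) (by fun_prop)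
    computable_interleave
  obtain ⟨d, hd⟩ := hU.exists_cpx_seg_two_mul_half_le
  refine ⟨c + d, fun A B n => ?_⟩
  have htruncate := hd (join (A, B)) n
  have hpair := hc (seg A ((n + 1) / 2)) (seg B ((n + 1) / 2)) (by simp only [length_seg])
  simp only [interleave_seg, length_seg] at hpair
  rw [cpxN]
  omega

end Interleave

/-! ### Average complexity -/

section Average

theorem measurable_join : Measurable _root_.join := by
  refine measurable_pi_lambda _ fun n => ?_
  unfold _root_.join
  split_ifs <;> fun_prop

theorem cyl_ofFn {n : ℕ} (v : Fin n → Bool) :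
    cyl (List.ofFn v) = (fun (Z : Cantor) (i : Fin n) => Z i) ⁻¹' {v} := by
  ext Z
  simp only [cyl, List.get_eq_getElem, List.getElem_ofFn, Set.mem_ofPred_eq, Set.mem_preimage,
    Set.mem_singleton_iff, funext_iff]
  exact ⟨fun h i => h (i.cast List.length_ofFn.symm), fun h i => h (i.cast List.length_ofFn)⟩

theorem integrable_seg (μ : Measure Cantor) [IsFiniteMeasure μ] (n : ℕ) (f : BStr → ℝ) :
    Integrable (fun Z => f (seg Z n)) μ :=
  (Integrable.of_finite (f := fun v : Fin n → Bool => f (List.ofFn v))).comp_measurable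
    (f := fun (Z : Cantor) (i : Fin n) => Z i) (by fun_prop)

theorem avgCpx_eq_integral (U : BStr →. BStr) (μ : Measure Cantor) [IsFiniteMeasure μ] (n : ℕ) :
    avgCpx U μ n = ∫ Z, (cpx U (seg Z n) : ℝ) ∂μ := by
  let π (Z : Cantor) (i : Fin n) : Bool := Z i
  have hπ : Measurable π := by fun_prop
  let f (v : Fin n → Bool) : ℝ := cpx U (List.ofFn v)
  calc avgCpx U μ n = ∑ v, (μ.map π).real {v} • f v := by
        refine Finset.sum_congr rfl fun v _ => ?_
        rw [smul_eq_mul, mul_comm, map_measureReal_apply hπ (measurableSet_singleton v), cyl_ofFn,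
          measureReal_def]
    _ = ∫ v, f v ∂μ.map π := (integral_fintype Integrable.of_finite).symm
    _ = ∫ Z, f (π Z) ∂μ :=
        integral_map hπ.aemeasurable (measurable_of_countable f).aestronglyMeasurable

theorem avgCpx_map_join_add_le {U : BStr →. BStr} {μ ν : Measure Cantor}
    [IsProbabilityMeasure μ] [IsProbabilityMeasure ν] {m n : ℕ} {b c : ℝ}
    (h : ∀ A B, (cpx U (seg (join (A, B)) n) : ℝ) + b ≤ cpx U (seg A m) + cpx U (seg B m) + c) :
    avgCpx U ((μ.prod ν).map join) n + b ≤ avgCpx U μ m + avgCpx U ν m + c := by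
  have hprob : IsProbabilityMeasure ((μ.prod ν).map _root_.join) :=
    Measure.isProbabilityMeasure_map measurable_join.aemeasurable
  let f (n : ℕ) (Z : Cantor) : ℝ := cpx U (seg Z n)
  have hf (ρ : Measure Cantor) [IsProbabilityMeasure ρ] (n : ℕ) : Integrable (f n) ρ :=
    integrable_seg ρ n fun x => cpx U x
  have hjoin : Integrable (fun p => f n (join p)) (μ.prod ν) :=
    (hf _ n).comp_measurable measurable_join
  have hfst : Integrable (fun p : Cantor × Cantor => f m p.1) (μ.prod ν) := (hf μ m).comp_fst ν
  have hsnd : Integrable (fun p : Cantor × Cantor => f m p.2) (μ.prod ν) := (hf ν m).comp_snd μ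
  have hadd : Integrable (fun p : Cantor × Cantor => f m p.1 + f m p.2) (μ.prod ν) :=
    hfst.add hsnd
  calc avgCpx U ((μ.prod ν).map join) n + b
      = ∫ p, (f n (join p) + b) ∂μ.prod ν := by
        rw [avgCpx_eq_integral, integral_map measurable_join.aemeasurable
          (hf _ n).aestronglyMeasurable, integral_add hjoin (integrable_const b)]
        simp [f]
    _ ≤ ∫ p : Cantor × Cantor, (f m p.1 + f m p.2 + c) ∂μ.prod ν :=
        integral_mono (hjoin.add (integrable_const b))
          (hadd.add (integrable_const c)) fun p => h p.1 p.2
    _ = avgCpx U μ m + avgCpx U ν m + c := by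
        rw [integral_add hadd (integrable_const c), integral_add hfst hsnd,
          integral_fun_fst, integral_fun_snd, avgCpx_eq_integral, avgCpx_eq_integral]
        simp [f]

end Average

theorem product_of_KTrivial_is_KTrivial_general {U : BStr →. BStr} (hU : UniversalPrefixFree U)
    {μ ν : Measure Cantor} [IsProbabilityMeasure μ] [IsProbabilityMeasure ν]
    (hμ : MeasTrivial U μ) (hν : MeasTrivial U ν) :
    MeasTrivial U ((μ.prod ν).map join) := by
  obtain ⟨cμ, hμ⟩ := hμ
  obtain ⟨cν, hν⟩ := hν
  obtain ⟨c, hjoin⟩ := hU.exists_cpx_seg_join_add_cpxN_le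
  obtain ⟨d, hhalf⟩ := hU.exists_cpxN_comp_le (f := fun n => (n + 1) / 2) (by fun_prop)
  refine ⟨cμ + cν + c + d, fun n => ?_⟩
  let m := (n + 1) / 2
  calc avgCpx U ((μ.prod ν).map join) n
      ≤ avgCpx U μ m + avgCpx U ν m + c - cpxN U m :=
        le_sub_iff_add_le.2 <| avgCpx_map_join_add_le fun A B => by exact_mod_cast hjoin A B n
    _ ≤ cpxN U m + cμ + (cpxN U m + cν) + c - cpxN U m := by
        gcongr
        exacts [hμ m, hν m]
    _ = cpxN U m + (cμ + cν + c) := by ring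
    _ ≤ cpxN U n + d + (cμ + cν + c) := by
        gcongr
        exact_mod_cast hhalf n
    _ = cpxN U n + (cμ + cν + c + d) := by ring

/-- if `μ` and `ν` are K-trivial measures, then the pushforward
of `μ × ν` under the join map is K-trivial. -/
theorem product_of_KTrivial_is_KTrivial
    (UK : BStr →. BStr) (hUK : UniversalPrefixFree UK)
    (hlen : ∀ x : BStr, cpxN UK x.length ≤ cpx UK x)
    (μ ν : Measure Cantor) [IsProbabilityMeasure μ] [IsProbabilityMeasure ν]
    (hμ : MeasTrivial UK μ) (hν : MeasTrivial UK ν) :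
    MeasTrivial UK (Measure.map join (μ.prod ν)) := by
  exact product_of_KTrivial_is_KTrivial_general hUK hμ hν
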